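/- Let G be a finite simple graph with Δ(G) = 4, χ(G) = 3, ivs_χ(G) = 3 and vs_χ(G) = 2. Let C_χ(G) be the set of vertices x ∈ V(G) for which there exists y ∈ V(G) such that the subgraph induced on V(G) \ {x, y} has chromatic number 2. Let e₁, …, e_t be distinct edges of G, where each eᵢ has endpoints xᵢ, yᵢ and at most one endpoint of eᵢ lies in C_χ(G), and let n₁, …, n_t be positive even integers. Let H be the graph with vertex set V(G) together with new vertices pᵢⱼ for 1 ≤ i ≤ t, 1 ≤ j ≤ nᵢ, whose edges are: all edges of G except e₁, …, e_t, and for each i the path edges xᵢpᵢ₁, pᵢ₁pᵢ₂, …, p_{i,nᵢ−1}p_{i,nᵢ}, p_{i,nᵢ}yᵢ (i.e., H is obtained from G by subdividing each eᵢ with nᵢ new vertices). Then Δ(H) = 4, χ(H) = 3, ivs_χ(H) = 3 and vs_χ(H) = 2. -/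

import Mathlib

/-- The chromatic number of `G` as a natural number. -/
noncomputable def chi {V : Type*} [Fintype V] (G : SimpleGraph V) : ℕ :=
  G.chromaticNumber.toNat

/-- The maximum degree of `G` (classical version, no decidability assumptions). -/
noncomputable def maxDeg {V : Type*} [Fintype V] (G : SimpleGraph V) : ℕ :=
  @SimpleGraph.maxDegree V G _ (Classical.decRel _)

/-- The degree of a vertex `v` of `G` (classical version). -/
noncomputable def deg {V : Type*} [Fintype V] (G : SimpleGraph V) (v : V) : ℕ :=
  @SimpleGraph.degree V G v (@SimpleGraph.neighborSetFintype V G _ (Classical.decRel _) v)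

/-- The chromatic vertex stability of `G`: the minimum size of a set `S` of vertices
such that the subgraph induced on the complement of `S` has chromatic number `χ(G) - 1`. -/
noncomputable def vsChi {V : Type*} [Fintype V] [DecidableEq V] (G : SimpleGraph V) : ℕ :=
  sInf {n : ℕ | ∃ S : Finset V, S.card = n ∧
    chi (G.induce (↑(Sᶜ) : Set V)) = chi G - 1}

/-- The independent chromatic vertex stability of `G`: the minimum size of an independent
set `S` of vertices such that the subgraph induced on the complement of `S` has chromatic
number `χ(G) - 1`. -/
noncomputable def ivsChi {V : Type*} [Fintype V] [DecidableEq V] (G : SimpleGraph V) : ℕ :=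
  sInf {n : ℕ | ∃ S : Finset V, S.card = n ∧
    (∀ x ∈ S, ∀ y ∈ S, ¬ G.Adj x y) ∧
    chi (G.induce (↑(Sᶜ) : Set V)) = chi G - 1}

/-- `x` belongs to `C_χ(G)`: there is a vertex `y` such that deleting `{x, y}` leaves a
graph of chromatic number `2`. -/
def memCchi {V : Type*} [Fintype V] [DecidableEq V] (G : SimpleGraph V) (x : V) : Prop :=
  ∃ y : V, chi (G.induce (↑(({x, y} : Finset V)ᶜ) : Set V)) = 2

/-- The graph obtained from `G` by deleting the edges `xᵢyᵢ` (for `i < t`) and, for each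
`i`, adding the path `xᵢ, pᵢ₁, …, pᵢₙᵢ, yᵢ` through `n i` new vertices, i.e. subdividing
the edge `xᵢyᵢ` with `n i` new vertices. -/
def subdivide {V : Type*} (G : SimpleGraph V) (t : ℕ) (x y : Fin t → V) (n : Fin t → ℕ) :
    SimpleGraph (V ⊕ Σ i : Fin t, Fin (n i)) :=
  SimpleGraph.fromRel (fun a b =>
    match a, b with
    | Sum.inl u, Sum.inl v =>
        G.Adj u v ∧ ∀ i, ¬((u = x i ∧ v = y i) ∨ (u = y i ∧ v = x i))
    | Sum.inl u, Sum.inr p => u = x p.1 ∧ (p.2 : ℕ) = 0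
    | Sum.inr p, Sum.inl u => u = y p.1 ∧ (p.2 : ℕ) = n p.1 - 1
    | Sum.inr p, Sum.inr q => p.1 = q.1 ∧ (p.2 : ℕ) + 1 = (q.2 : ℕ))

/-!
Replacing an edge by a path of odd length does not affect 2-colorings: a 2-coloring of `G`, or of
`G` minus some vertices, extends along the new paths, and conversely the ends of an intact path
receive distinct colors. Deleted new vertices can be traded for an end of the edge they
subdivide. The trade works for both ends, so a pair of vertices that destroys all odd cycles of the
subdivision when no single vertex does, and that uses a new vertex of `eᵢ`, would put both ends of
`eᵢ` in `C_χ(G)`. Hence the independent such pairs of the subdivision are independent pairs of `G`,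
unless they are the two ends of some `eᵢ`, which is excluded for the same reason.
-/

section Colorable

variable {V : Type*} {G : SimpleGraph V} {k : ℕ}

theorem colorable_induce_compl_empty_iff :
    (G.induce (∅ : Set V)ᶜ).Colorable k ↔ G.Colorable k := by
  rw [Set.compl_empty]
  exact ⟨.of_hom (SimpleGraph.induceUnivIso G).symm.toHom,
    .of_hom (SimpleGraph.induceUnivIso G).toHom⟩

theorem exists_forall_mem_adj_ne_of_coloring_induce {α : Type*} [Nonempty α] {s : Set V}
    (C : (G.induce s).Coloring α) :
    ∃ c : V → α, ∀ u ∈ s, ∀ v ∈ s, G.Adj u v → c u ≠ c v := by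
  refine ⟨Function.extend Subtype.val C fun _ => Classical.arbitrary α, fun u hu v hv huv => ?_⟩
  rw [Subtype.val_injective.extend_apply C _ ⟨u, hu⟩,
    Subtype.val_injective.extend_apply C _ ⟨v, hv⟩]
  exact C.valid huv

theorem colorable_induce_compl_succ {R S : Set V} (hR : G.IsIndepSet R)
    (h : (G.induce (R ∪ S)ᶜ).Colorable k) : (G.induce Sᶜ).Colorable (k + 1) := by
  classical
  obtain ⟨C⟩ := h
  let D : (G.induce Sᶜ).Coloring (Option (Fin k)) :=
    .mk (fun v => if hv : (v : V) ∈ R then none else some (C ⟨v, not_or.2 ⟨hv, v.2⟩⟩)) <| by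
      intro u v huv
      by_cases hu : (u : V) ∈ R <;> by_cases hv : (v : V) ∈ R
      · exact absurd huv (hR hu hv (G.ne_of_adj huv))
      · simp [hu, hv]
      · simp [hu, hv]
      · have huv' : (G.induce (R ∪ S)ᶜ).Adj ⟨u, not_or.2 ⟨hu, u.2⟩⟩ ⟨v, not_or.2 ⟨hv, v.2⟩⟩ := huv
        simpa [hu, hv] using C.valid huv'
  simpa using D.colorable

theorem exists_isIndepSet_colorable_induce_compl (h : G.Colorable (k + 1)) :
    ∃ S : Set V, G.IsIndepSet S ∧ (G.induce Sᶜ).Colorable k := by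
  obtain ⟨C⟩ := h
  refine ⟨C.colorClass (Fin.last k), C.isIndepSet_colorClass _,
    ⟨.mk (fun v => (C v).castPred v.2) fun {u v} huv heq => C.valid huv ?_⟩⟩
  exact Fin.castPred_inj.1 heq

end Colorable

section ChromaticNumber

variable {V : Type*} [Fintype V] {G : SimpleGraph V} {k : ℕ}

theorem chi_le_iff_colorable : chi G ≤ k ↔ G.Colorable k := by
  have hfinite : G.chromaticNumber ≠ ⊤ :=
    SimpleGraph.chromaticNumber_ne_top_iff_exists.2 ⟨_, G.colorable_of_fintype⟩
  rw [← SimpleGraph.chromaticNumber_le_iff_colorable, chi, ← ENat.natCast_toNat hfinite]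
  simp

theorem colorable_chi : G.Colorable (chi G) :=
  chi_le_iff_colorable.1 le_rfl

variable [DecidableEq V]

theorem chi_induce_compl_le_iff {S : Finset V} :
    chi (G.induce (↑(Sᶜ) : Set V)) ≤ k ↔ (G.induce (S : Set V)ᶜ).Colorable k := by
  rw [chi_le_iff_colorable, Finset.coe_compl]

theorem exists_subset_chi_induce_compl_eq {S : Finset V} (hk : k ≤ chi G)
    (hS : (G.induce (S : Set V)ᶜ).Colorable k) :
    ∃ T ⊆ S, chi (G.induce (↑(Tᶜ) : Set V)) = k := by
  induction S using Finset.induction with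
  | empty =>
    refine ⟨∅, subset_rfl, (chi_induce_compl_le_iff.2 hS).antisymm (hk.trans ?_)⟩
    rw [chi_le_iff_colorable, ← colorable_induce_compl_empty_iff, ← Finset.coe_empty,
      ← chi_induce_compl_le_iff]
  | insert v S _ ih =>
    by_cases hcol : (G.induce (S : Set V)ᶜ).Colorable k
    · obtain ⟨T, hTS, hT⟩ := ih hcol
      exact ⟨T, hTS.trans (Finset.subset_insert v S), hT⟩
    · refine ⟨insert v S, subset_rfl, (chi_induce_compl_le_iff.2 hS).antisymm (not_lt.1 ?_)⟩
      intro hlt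
      obtain ⟨j, rfl⟩ := Nat.exists_eq_add_one_of_ne_zero (Nat.ne_zero_of_lt hlt)
      have hinsert := chi_induce_compl_le_iff.1 (Nat.le_of_lt_succ hlt)
      rw [Finset.coe_insert, Set.insert_eq] at hinsert
      exact hcol (colorable_induce_compl_succ (Set.pairwise_singleton _ _) hinsert)

theorem exists_finset_isIndepSet_chi_induce_compl_eq (G : SimpleGraph V) :
    ∃ S : Finset V, G.IsIndepSet S ∧ chi (G.induce (↑(Sᶜ) : Set V)) = chi G - 1 := by
  have hcol : G.Colorable (chi G - 1 + 1) := colorable_chi.mono (by lia)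
  obtain ⟨S, hind, hS⟩ := exists_isIndepSet_colorable_induce_compl hcol
  lift S to Finset V using S.toFinite
  obtain ⟨T, hTS, hT⟩ := exists_subset_chi_induce_compl_eq (Nat.sub_le _ _) hS
  exact ⟨T, hind.mono (Finset.coe_subset.2 hTS), hT⟩

theorem isLeast_vsChi (G : SimpleGraph V) :
    IsLeast {m | ∃ S : Finset V, S.card = m ∧ (G.induce (S : Set V)ᶜ).Colorable (chi G - 1)}
      (vsChi G) := by
  constructor
  · obtain ⟨S, -, hS⟩ := exists_finset_isIndepSet_chi_induce_compl_eq G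
    have hne : {m | ∃ S : Finset V, S.card = m ∧
        chi (G.induce (↑(Sᶜ) : Set V)) = chi G - 1}.Nonempty := ⟨_, S, rfl, hS⟩
    obtain ⟨T, hcard, hT⟩ := Nat.sInf_mem hne
    exact ⟨T, hcard, chi_induce_compl_le_iff.1 hT.le⟩
  · rintro _ ⟨S, rfl, hS⟩
    obtain ⟨T, hTS, hT⟩ := exists_subset_chi_induce_compl_eq (Nat.sub_le _ _) hS
    have hle : vsChi G ≤ T.card := Nat.sInf_le ⟨T, rfl, hT⟩
    exact hle.trans (Finset.card_le_card hTS)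

theorem isLeast_ivsChi (G : SimpleGraph V) :
    IsLeast {m | ∃ S : Finset V, S.card = m ∧ G.IsIndepSet S ∧
      (G.induce (S : Set V)ᶜ).Colorable (chi G - 1)} (ivsChi G) := by
  have isIndepSet_iff (S : Finset V) : G.IsIndepSet S ↔ ∀ x ∈ S, ∀ y ∈ S, ¬G.Adj x y :=
    ⟨fun h x hx y hy hxy => h hx hy hxy.ne hxy, fun h x hx y hy _ => h x hx y hy⟩
  constructor
  · obtain ⟨S, hind, hS⟩ := exists_finset_isIndepSet_chi_induce_compl_eq G
    have hne : {m | ∃ S : Finset V, S.card = m ∧ (∀ x ∈ S, ∀ y ∈ S, ¬G.Adj x y) ∧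
        chi (G.induce (↑(Sᶜ) : Set V)) = chi G - 1}.Nonempty :=
      ⟨_, S, rfl, (isIndepSet_iff S).1 hind, hS⟩
    obtain ⟨T, hcard, hindT, hT⟩ := Nat.sInf_mem hne
    exact ⟨T, hcard, (isIndepSet_iff T).2 hindT, chi_induce_compl_le_iff.1 hT.le⟩
  · rintro _ ⟨S, rfl, hind, hS⟩
    obtain ⟨T, hTS, hT⟩ := exists_subset_chi_induce_compl_eq (Nat.sub_le _ _) hS
    have hindT : G.IsIndepSet T := hind.mono (Finset.coe_subset.2 hTS)
    have hle : ivsChi G ≤ T.card := Nat.sInf_le ⟨T, rfl, (isIndepSet_iff T).1 hindT, hT⟩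
    exact hle.trans (Finset.card_le_card hTS)

theorem memCchi_of_colorable_two {u v : V} (hv : ¬(G.induce {v}ᶜ).Colorable 2)
    (huv : (G.induce {u, v}ᶜ).Colorable 2) : memCchi G u := by
  rw [← Finset.coe_pair] at huv
  refine ⟨v, (chi_induce_compl_le_iff.2 huv).antisymm (not_lt.1 fun hlt => hv ?_)⟩
  have hone := chi_induce_compl_le_iff.1 (Nat.le_of_lt_succ hlt)
  rw [Finset.coe_pair, Set.insert_eq] at hone
  exact colorable_induce_compl_succ (Set.pairwise_singleton _ _) hone

end ChromaticNumber

section MaxDegree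

variable {V : Type*} [Fintype V] {G : SimpleGraph V}

theorem deg_eq_ncard_neighborSet (v : V) : deg G v = (G.neighborSet v).ncard := by
  classical
  rw [Set.ncard_eq_toFinset_card', Set.toFinset_card, SimpleGraph.card_neighborSet_eq_degree, deg]

theorem deg_le_maxDeg (v : V) : deg G v ≤ maxDeg G :=
  @SimpleGraph.degree_le_maxDegree _ G _ (Classical.decRel _) v

theorem maxDeg_le_of_forall_deg_le {k : ℕ} (h : ∀ v, deg G v ≤ k) : maxDeg G ≤ k :=
  @SimpleGraph.maxDegree_le_of_forall_degree_le _ G _ (Classical.decRel _) k h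

theorem two_le_maxDeg_of_not_colorable_two (h : ¬G.Colorable 2) : 2 ≤ maxDeg G := by
  have hcycle : ¬G.IsAcyclic := fun hG => h hG.colorable_two
  simp only [SimpleGraph.IsAcyclic, not_forall, not_not] at hcycle
  obtain ⟨v, c, hc⟩ := hcycle
  calc
    2 = (c.toSubgraph.neighborSet v).ncard :=
      (hc.ncard_neighborSet_toSubgraph_eq_two c.start_mem_support).symm
    _ ≤ (G.neighborSet v).ncard := Set.ncard_le_ncard (c.toSubgraph.neighborSet_subset v)
    _ = deg G v := (deg_eq_ncard_neighborSet v).symm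
    _ ≤ maxDeg G := deg_le_maxDeg v

end MaxDegree

/-- The map sending the new vertices that subdivide the `i`-th edge to `z i`, typically an end of
that edge, and fixing the vertices of `G`. -/
def collapse {V : Type*} {t : ℕ} {n : Fin t → ℕ} (z : Fin t → V) :
    V ⊕ (Σ i : Fin t, Fin (n i)) → V :=
  Sum.elim id fun p => z p.1

/-- The end opposite to `v` of the `i`-th edge, for those `i` whose edge contains `v`. -/
def farEnd {V : Type*} [DecidableEq V] {t : ℕ} (x y : Fin t → V) (v : V) (i : Fin t) : V :=
  if v = x i then y i else x i

section Subdivide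

variable {V : Type*} {G : SimpleGraph V} {t k : ℕ} {x y z : Fin t → V} {n : Fin t → ℕ}

section Adjacency

variable {u v : V} {p q : Σ i : Fin t, Fin (n i)}

theorem subdivide_adj_inl_inl :
    (subdivide G t x y n).Adj (.inl u) (.inl v) ↔ G.Adj u v ∧ ∀ i, s(u, v) ≠ s(x i, y i) := by
  have := G.adj_comm u v
  have := G.ne_of_adj (a := u) (b := v)
  simp only [subdivide, SimpleGraph.fromRel_adj, ne_eq, Sum.inl.injEq, Sym2.eq_iff]
  grind

theorem subdivide_adj_inl_inr :
    (subdivide G t x y n).Adj (.inl u) (.inr p) ↔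
      (u = x p.1 ∧ (p.2 : ℕ) = 0) ∨ (u = y p.1 ∧ (p.2 : ℕ) + 1 = n p.1) := by
  have := p.2.isLt
  simp only [subdivide, SimpleGraph.fromRel_adj, ne_eq, reduceCtorEq, not_false_eq_true, true_and]
  grind

theorem subdivide_adj_inr_inr :
    (subdivide G t x y n).Adj (.inr p) (.inr q) ↔
      p.1 = q.1 ∧ ((p.2 : ℕ) + 1 = q.2 ∨ (q.2 : ℕ) + 1 = p.2) := by
  simp only [subdivide, SimpleGraph.fromRel_adj, ne_eq, Sum.inr.injEq]
  grind

end Adjacency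

section Degree

variable [DecidableEq V]

theorem adj_collapse_farEnd_of_subdivide_adj (hadj : ∀ i, G.Adj (x i) (y i)) {v : V}
    {w : V ⊕ Σ i : Fin t, Fin (n i)} (h : (subdivide G t x y n).Adj (.inl v) w) :
    G.Adj v (collapse (farEnd x y v) w) := by
  rcases w with u | p
  · exact (subdivide_adj_inl_inl.1 h).1
  · have hends := subdivide_adj_inl_inr.1 h
    have hxy := hadj p.1
    have hyx := hxy.symm
    simp only [collapse, farEnd, Sum.elim_inr]
    grind

theorem edge_eq_of_subdivide_adj_inr {v : V} {p : Σ i : Fin t, Fin (n i)}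
    (h : (subdivide G t x y n).Adj (.inl v) (.inr p)) :
    s(v, farEnd x y v p.1) = s(x p.1, y p.1) := by
  have hends := subdivide_adj_inl_inr.1 h
  rw [Sym2.eq_iff]
  grind [farEnd]

theorem collapse_farEnd_injOn_neighborSet (hadj : ∀ i, G.Adj (x i) (y i))
    (hinj : Function.Injective fun i => s(x i, y i)) (v : V) :
    Set.InjOn (collapse (farEnd x y v)) ((subdivide G t x y n).neighborSet (.inl v)) := by
  rintro (u | ⟨i, j⟩) hu (w | ⟨i', j'⟩) hw h <;>
    rw [SimpleGraph.mem_neighborSet] at hu hw <;>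
    simp only [collapse, Sum.elim_inl, Sum.elim_inr, id] at h
  · rw [h]
  · exact absurd (h ▸ edge_eq_of_subdivide_adj_inr hw) ((subdivide_adj_inl_inl.1 hu).2 i')
  · exact absurd (h ▸ edge_eq_of_subdivide_adj_inr hu) ((subdivide_adj_inl_inl.1 hw).2 i)
  · obtain rfl : i = i' := hinj <| (edge_eq_of_subdivide_adj_inr hu).symm.trans <|
      (congrArg (s(v, ·)) h).trans (edge_eq_of_subdivide_adj_inr hw)
    have hj := subdivide_adj_inl_inr.1 hu
    have hj' := subdivide_adj_inl_inr.1 hw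
    have hne := (hadj i).ne
    rw [show j = j' from Fin.ext (by grind)]

theorem exists_subdivide_adj_collapse_farEnd_eq (hpos : ∀ i, 0 < n i) {v w : V} (h : G.Adj v w) :
    ∃ a, (subdivide G t x y n).Adj (.inl v) a ∧ collapse (farEnd x y v) a = w := by
  by_cases hsub : ∃ i, s(v, w) = s(x i, y i)
  · obtain ⟨i, hi⟩ := hsub
    rcases Sym2.eq_iff.1 hi with ⟨rfl, rfl⟩ | ⟨rfl, rfl⟩
    · exact ⟨.inr ⟨i, 0, hpos i⟩, subdivide_adj_inl_inr.2 (.inl ⟨rfl, rfl⟩), if_pos rfl⟩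
    · exact ⟨.inr ⟨i, n i - 1, Nat.sub_one_lt_of_lt (hpos i)⟩,
        subdivide_adj_inl_inr.2 (.inr ⟨rfl, Nat.sub_add_cancel (hpos i)⟩), if_neg h.ne⟩
  · exact ⟨.inl w, subdivide_adj_inl_inl.2 ⟨h, not_exists.1 hsub⟩, rfl⟩

end Degree

section MaxDegree

variable [Fintype V]

theorem deg_subdivide_inl (hadj : ∀ i, G.Adj (x i) (y i))
    (hinj : Function.Injective fun i => s(x i, y i)) (hpos : ∀ i, 0 < n i) (v : V) :
    deg (subdivide G t x y n) (.inl v) = deg G v := by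
  classical
  rw [deg_eq_ncard_neighborSet, deg_eq_ncard_neighborSet]
  exact Set.BijOn.ncard_eq ⟨fun _ => adj_collapse_farEnd_of_subdivide_adj hadj,
    collapse_farEnd_injOn_neighborSet hadj hinj v,
    fun _ => exists_subdivide_adj_collapse_farEnd_eq hpos⟩

theorem deg_subdivide_inr_le_two (p : Σ i : Fin t, Fin (n i)) :
    deg (subdivide G t x y n) (.inr p) ≤ 2 := by
  obtain ⟨i, j⟩ := p
  let pred : V ⊕ Σ i : Fin t, Fin (n i) :=
    if (j : ℕ) = 0 then .inl (x i) else .inr ⟨i, j - 1, by lia⟩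
  let succ : V ⊕ Σ i : Fin t, Fin (n i) :=
    if h : (j : ℕ) + 1 < n i then .inr ⟨i, j + 1, h⟩ else .inl (y i)
  have hsub : (subdivide G t x y n).neighborSet (.inr ⟨i, j⟩) ⊆ {pred, succ} := by
    rintro (u | ⟨i', j'⟩) hw <;> rw [SimpleGraph.mem_neighborSet] at hw
    · have hends := subdivide_adj_inl_inr.1 hw.symm
      grind
    · obtain ⟨rfl, hj⟩ : i = i' ∧ _ := subdivide_adj_inr_inr.1 hw
      grind
  calc
    _ = _ := deg_eq_ncard_neighborSet _
    _ ≤ ({pred, succ} : Set _).ncard := Set.ncard_le_ncard hsub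
    _ ≤ ({succ} : Set _).ncard + 1 := Set.ncard_insert_le _ _
    _ = 2 := by rw [Set.ncard_singleton]

theorem maxDeg_subdivide (hadj : ∀ i, G.Adj (x i) (y i))
    (hinj : Function.Injective fun i => s(x i, y i)) (hpos : ∀ i, 0 < n i) (hG : 2 ≤ maxDeg G) :
    maxDeg (subdivide G t x y n) = maxDeg G := by
  have hdeg := deg_subdivide_inl hadj hinj hpos
  refine le_antisymm (maxDeg_le_of_forall_deg_le ?_) (maxDeg_le_of_forall_deg_le fun v => ?_)
  · rintro (v | p)
    · exact (hdeg v).trans_le (deg_le_maxDeg v)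
    · exact (deg_subdivide_inr_le_two p).trans hG
  · exact (hdeg v).symm.trans_le (deg_le_maxDeg _)

end MaxDegree

section Coloring

variable {i : Fin t}

theorem exists_ne_forall_eq {α : Type*} [Nontrivial α] {P Q : Prop} {a₀ b₀ : α}
    (h : P → Q → a₀ ≠ b₀) : ∃ a b, a ≠ b ∧ (P → a = a₀) ∧ (Q → b = b₀) := by
  by_cases hQ : Q
  · by_cases hP : P
    · exact ⟨a₀, b₀, h hP hQ, fun _ => rfl, fun _ => rfl⟩
    · obtain ⟨a, ha⟩ := exists_ne b₀
      exact ⟨a, b₀, ha, fun h => absurd h hP, fun _ => rfl⟩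
  · obtain ⟨b, hb⟩ := exists_ne a₀
    exact ⟨a₀, b, hb.symm, fun _ => rfl, fun h => absurd h hQ⟩

theorem colorable_subdivide_induce_compl {S : Set V} (hadj : ∀ i, G.Adj (x i) (y i))
    (heven : ∀ i, Even (n i)) (hk : 2 ≤ k) (h : (G.induce Sᶜ).Colorable k) :
    ((subdivide G t x y n).induce (Sum.inl '' S)ᶜ).Colorable k := by
  obtain ⟨C⟩ := h
  have : Nontrivial (Fin k) := Fin.nontrivial_iff_two_le.2 hk
  obtain ⟨c, hc⟩ := exists_forall_mem_adj_ne_of_coloring_induce C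
  choose a b hab ha hb using fun i =>
    exists_ne_forall_eq fun hx hy => hc (x i) hx (y i) hy (hadj i)
  -- The path replacing the `i`-th edge, ends included, is colored `a i, b i, …, a i, b i`.
  let d : V ⊕ (Σ i : Fin t, Fin (n i)) → Fin k :=
    Sum.elim c fun p => if Even (p.2 : ℕ) then b p.1 else a p.1
  have hmixed : ∀ u ∉ S, ∀ p, (subdivide G t x y n).Adj (.inl u) (.inr p) →
      d (.inl u) ≠ d (.inr p) := by
    intro u hu p hup
    have hne := hab p.1
    have hn := heven p.1
    rcases subdivide_adj_inl_inr.1 hup with ⟨rfl, hp⟩ | ⟨rfl, hp⟩ <;> grind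
  refine ⟨.mk (fun w => d w) ?_⟩
  rintro ⟨u | p, hu⟩ ⟨v | q, hv⟩ huv <;> rw [SimpleGraph.induce_adj] at huv
  · exact hc u (by simpa using hu) v (by simpa using hv) (subdivide_adj_inl_inl.1 huv).1
  · exact hmixed u (by simpa using hu) q huv
  · exact (hmixed v (by simpa using hv) p huv.symm).symm
  · obtain ⟨hpq, hsucc⟩ := subdivide_adj_inr_inr.1 huv
    have hne := hab q.1
    simp only [d, Sum.elim_inr, hpq]
    grind

theorem colorable_subdivide (hadj : ∀ i, G.Adj (x i) (y i)) (heven : ∀ i, Even (n i))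
    (hk : 2 ≤ k) (h : G.Colorable k) : (subdivide G t x y n).Colorable k := by
  rw [← colorable_induce_compl_empty_iff] at h ⊢
  exact Set.image_empty Sum.inl ▸ colorable_subdivide_induce_compl hadj heven hk h

theorem exists_walk_subdivide_inl_inr {s : Set (V ⊕ Σ i : Fin t, Fin (n i))}
    (hx : .inl (x i) ∈ s) (hp : ∀ j, .inr ⟨i, j⟩ ∈ s) (j : ℕ) (hj : j < n i) :
    ∃ w : ((subdivide G t x y n).induce s).Walk ⟨_, hx⟩ ⟨_, hp ⟨j, hj⟩⟩, w.length = j + 1 := by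
  induction j with
  | zero =>
    have hadj : ((subdivide G t x y n).induce s).Adj ⟨_, hx⟩ ⟨_, hp ⟨0, hj⟩⟩ :=
      SimpleGraph.induce_adj.2 (subdivide_adj_inl_inr.2 (.inl ⟨rfl, rfl⟩))
    exact ⟨hadj.toWalk, rfl⟩
  | succ j ih =>
    obtain ⟨w, hw⟩ := ih (by lia)
    have hadj : ((subdivide G t x y n).induce s).Adj ⟨_, hp ⟨j, by lia⟩⟩ ⟨_, hp ⟨j + 1, hj⟩⟩ :=
      SimpleGraph.induce_adj.2 (subdivide_adj_inr_inr.2 ⟨rfl, .inl rfl⟩)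
    exact ⟨w.concat hadj, by rw [SimpleGraph.Walk.length_concat, hw]⟩

theorem exists_walk_subdivide_inl_inl {s : Set (V ⊕ Σ i : Fin t, Fin (n i))}
    (hpos : 0 < n i) (hx : .inl (x i) ∈ s) (hy : .inl (y i) ∈ s) (hp : ∀ j, .inr ⟨i, j⟩ ∈ s) :
    ∃ w : ((subdivide G t x y n).induce s).Walk ⟨_, hx⟩ ⟨_, hy⟩, w.length = n i + 1 := by
  obtain ⟨w, hw⟩ := exists_walk_subdivide_inl_inr (G := G) (y := y) hx hp (n i - 1) (by lia)
  have hadj : ((subdivide G t x y n).induce s).Adj ⟨_, hp ⟨n i - 1, by lia⟩⟩ ⟨_, hy⟩ :=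
    SimpleGraph.induce_adj.2
      (subdivide_adj_inl_inr.2 (.inr ⟨rfl, Nat.sub_add_cancel hpos⟩)).symm
  exact ⟨w.concat hadj, by rw [SimpleGraph.Walk.length_concat, hw, Nat.sub_add_cancel hpos]⟩

theorem colorable_two_of_subdivide {T : Set (V ⊕ Σ i : Fin t, Fin (n i))}
    (hpos : ∀ i, 0 < n i) (heven : ∀ i, Even (n i)) (hz : ∀ i, z i = x i ∨ z i = y i)
    (h : ((subdivide G t x y n).induce Tᶜ).Colorable 2) :
    (G.induce (collapse z '' T)ᶜ).Colorable 2 := by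
  have hinl : ∀ v ∉ collapse z '' T, .inl v ∈ Tᶜ := fun v hv hvT => hv ⟨_, hvT, rfl⟩
  let C := h.toColoring (α := Bool) le_rfl
  have hends : ∀ i (hx : x i ∉ collapse z '' T) (hy : y i ∉ collapse z '' T),
      C ⟨_, hinl _ hx⟩ ≠ C ⟨_, hinl _ hy⟩ := by
    intro i hx hy
    have hp : ∀ j, .inr ⟨i, j⟩ ∈ Tᶜ := fun j hj =>
      (hz i).elim (fun h => hx ⟨_, hj, h⟩) (fun h => hy ⟨_, hj, h⟩)
    obtain ⟨w, hw⟩ := exists_walk_subdivide_inl_inl (G := G) (hpos i) (hinl _ hx) (hinl _ hy) hp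
    have hodd := (C.odd_length_iff_not_congr w).1 (hw ▸ (heven i).add_one)
    grind
  refine ⟨(SimpleGraph.recolorOfEquiv _ finTwoEquiv.symm) <|
    .mk (fun v => C ⟨_, hinl v v.2⟩) fun {u v} huv => ?_⟩
  obtain ⟨u, hu⟩ := u
  obtain ⟨v, hv⟩ := v
  by_cases hsub : ∃ i, s(u, v) = s(x i, y i)
  · obtain ⟨i, hi⟩ := hsub
    rcases Sym2.eq_iff.1 hi with ⟨rfl, rfl⟩ | ⟨rfl, rfl⟩
    · exact hends i hu hv
    · exact (hends i hv hu).symm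
  · exact C.valid (subdivide_adj_inl_inl.2 ⟨huv, not_exists.1 hsub⟩)

end Coloring

section Stability

variable [Fintype V]

theorem chi_subdivide_eq_three (hadj : ∀ i, G.Adj (x i) (y i)) (hpos : ∀ i, 0 < n i)
    (heven : ∀ i, Even (n i)) (hχ : chi G = 3) : chi (subdivide G t x y n) = 3 := by
  refine le_antisymm ?_ (not_lt.1 fun hlt => ?_)
  · exact chi_le_iff_colorable.2
      (colorable_subdivide hadj heven (by lia) (chi_le_iff_colorable.1 hχ.le))
  · have htwo := chi_le_iff_colorable.1 (Nat.le_of_lt_succ hlt)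
    rw [← colorable_induce_compl_empty_iff] at htwo
    have hG := colorable_two_of_subdivide (z := x) hpos heven (fun _ => .inl rfl) htwo
    rw [Set.image_empty, colorable_induce_compl_empty_iff, ← chi_le_iff_colorable] at hG
    lia

variable [DecidableEq V]

theorem vsChi_subdivide (hadj : ∀ i, G.Adj (x i) (y i)) (hpos : ∀ i, 0 < n i)
    (heven : ∀ i, Even (n i)) (hχ : chi G = 3) :
    vsChi (subdivide G t x y n) = vsChi G := by
  have hG := isLeast_vsChi G
  have hH := isLeast_vsChi (subdivide G t x y n)
  rw [chi_subdivide_eq_three hadj hpos heven hχ] at hH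
  rw [hχ] at hG
  apply le_antisymm
  · obtain ⟨S, hcard, hS⟩ := hG.1
    rw [← hcard, ← Finset.card_map Function.Embedding.inl]
    exact hH.2 ⟨_, rfl, Finset.coe_map _ S ▸ colorable_subdivide_induce_compl hadj heven le_rfl hS⟩
  · obtain ⟨T, hcard, hT⟩ := hH.1
    rw [← hcard]
    have hT' := colorable_two_of_subdivide (z := x) hpos heven (fun _ => .inl rfl) hT
    rw [← Finset.coe_image] at hT'
    exact (hG.2 ⟨_, rfl, hT'⟩).trans Finset.card_image_le

theorem not_colorable_two_subdivide_induce_compl_inr (hpos : ∀ i, 0 < n i)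
    (heven : ∀ i, Even (n i)) (hsingle : ∀ v, ¬(G.induce {v}ᶜ).Colorable 2)
    (p : Σ i : Fin t, Fin (n i)) (hC : ¬(memCchi G (x p.1) ∧ memCchi G (y p.1)))
    (w : V ⊕ Σ i : Fin t, Fin (n i)) :
    ¬((subdivide G t x y n).induce {.inr p, w}ᶜ).Colorable 2 := by
  intro h
  have hx := colorable_two_of_subdivide hpos heven (fun _ => .inl rfl) h
  have hy := colorable_two_of_subdivide hpos heven (fun _ => .inr rfl) h
  rw [Set.image_pair] at hx hy
  exact hC ⟨memCchi_of_colorable_two (hsingle _) hx, memCchi_of_colorable_two (hsingle _) hy⟩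

theorem not_adj_of_not_subdivide_adj (hsingle : ∀ v, ¬(G.induce {v}ᶜ).Colorable 2)
    (hC : ∀ i, ¬(memCchi G (x i) ∧ memCchi G (y i))) {u v : V}
    (huv : (G.induce {u, v}ᶜ).Colorable 2)
    (hnadj : ¬(subdivide G t x y n).Adj (.inl u) (.inl v)) : ¬G.Adj u v := by
  have hu : memCchi G u := memCchi_of_colorable_two (hsingle v) huv
  have hv : memCchi G v := memCchi_of_colorable_two (hsingle u) (Set.pair_comm u v ▸ huv)
  refine fun hG => hnadj (subdivide_adj_inl_inl.2 ⟨hG, fun i hi => ?_⟩)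
  rcases Sym2.eq_iff.1 hi with ⟨rfl, rfl⟩ | ⟨rfl, rfl⟩
  · exact hC i ⟨hu, hv⟩
  · exact hC i ⟨hv, hu⟩

theorem isIndepSet_image_collapse_of_subdivide (hpos : ∀ i, 0 < n i) (heven : ∀ i, Even (n i))
    (hsingle : ∀ v, ¬(G.induce {v}ᶜ).Colorable 2)
    (hC : ∀ i, ¬(memCchi G (x i) ∧ memCchi G (y i))) {a b : V ⊕ Σ i : Fin t, Fin (n i)}
    (hab : ¬(subdivide G t x y n).Adj a b)
    (h : ((subdivide G t x y n).induce {a, b}ᶜ).Colorable 2) :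
    G.IsIndepSet (collapse x '' {a, b}) := by
  have hG := colorable_two_of_subdivide (z := x) hpos heven (fun _ => .inl rfl) h
  rw [Set.image_pair] at hG ⊢
  rcases a with u | p
  · rcases b with v | q
    · have huv := not_adj_of_not_subdivide_adj hsingle hC hG hab
      exact Set.pairwise_pair.2 fun _ => ⟨huv, fun hvu => huv hvu.symm⟩
    · rw [Set.pair_comm] at h
      exact absurd h (not_colorable_two_subdivide_induce_compl_inr hpos heven hsingle q (hC _) _)
  · exact absurd h (not_colorable_two_subdivide_induce_compl_inr hpos heven hsingle p (hC _) _)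

theorem exists_isIndepSet_of_subdivide (hpos : ∀ i, 0 < n i) (heven : ∀ i, Even (n i))
    (hC : ∀ i, ¬(memCchi G (x i) ∧ memCchi G (y i))) {T : Finset (V ⊕ Σ i : Fin t, Fin (n i))}
    (hcard : T.card ≤ 2) (hind : (subdivide G t x y n).IsIndepSet T)
    (hT : ((subdivide G t x y n).induce (T : Set _)ᶜ).Colorable 2) :
    ∃ S : Finset V, S.card ≤ T.card ∧ G.IsIndepSet S ∧ (G.induce (S : Set V)ᶜ).Colorable 2 := by
  suffices (∃ v, (G.induce {v}ᶜ).Colorable 2) ∧ T.card = 2 ∨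
      G.IsIndepSet (collapse x '' (T : Set (V ⊕ Σ i : Fin t, Fin (n i)))) by
    rcases this with ⟨⟨v, hv⟩, hcard⟩ | himage
    · rw [← Finset.coe_singleton] at hv
      exact ⟨{v}, by simp [hcard], by simp, hv⟩
    · have hT' := colorable_two_of_subdivide (z := x) hpos heven (fun _ => .inl rfl) hT
      rw [← Finset.coe_image] at himage hT'
      exact ⟨_, Finset.card_image_le, himage, hT'⟩
  rcases hcard.lt_or_eq with hlt | hcard
  · have hsub := Finset.card_le_one_iff_subsingleton.1 (Nat.le_of_lt_succ hlt)
    exact .inr ((hsub.image _).pairwise _)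
  · by_cases hsingle : ∃ v, (G.induce {v}ᶜ).Colorable 2
    · exact .inl ⟨hsingle, hcard⟩
    · obtain ⟨a, b, hne, rfl⟩ := Finset.card_eq_two.1 hcard
      rw [Finset.coe_pair] at hind hT ⊢
      exact .inr (isIndepSet_image_collapse_of_subdivide hpos heven (not_exists.1 hsingle) hC
        (hind (by simp) (by simp) hne) hT)

theorem ivsChi_subdivide (hadj : ∀ i, G.Adj (x i) (y i)) (hpos : ∀ i, 0 < n i)
    (heven : ∀ i, Even (n i)) (hC : ∀ i, ¬(memCchi G (x i) ∧ memCchi G (y i)))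
    (hχ : chi G = 3) (hivs : ivsChi G ≤ 3) :
    ivsChi (subdivide G t x y n) = ivsChi G := by
  have hG := isLeast_ivsChi G
  have hH := isLeast_ivsChi (subdivide G t x y n)
  rw [chi_subdivide_eq_three hadj hpos heven hχ] at hH
  rw [hχ] at hG
  apply le_antisymm
  · obtain ⟨S, hcard, hind, hS⟩ := hG.1
    rw [← hcard, ← Finset.card_map Function.Embedding.inl]
    refine hH.2 ⟨_, rfl, ?_,
      Finset.coe_map _ S ▸ colorable_subdivide_induce_compl hadj heven le_rfl hS⟩
    rw [Finset.coe_map]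
    rintro _ ⟨u, hu, rfl⟩ _ ⟨v, hv, rfl⟩ hne huv
    exact hind hu hv (ne_of_apply_ne _ hne) (subdivide_adj_inl_inl.1 huv).1
  · obtain ⟨T, hcard, hind, hT⟩ := hH.1
    rw [← hcard]
    rcases Nat.lt_or_ge 2 T.card with hlt | hle
    · exact hivs.trans hlt
    · obtain ⟨S, hST, hindS, hS⟩ := exists_isIndepSet_of_subdivide hpos heven hC hle hind hT
      exact (hG.2 ⟨S, rfl, hindS, hS⟩).trans hST

end Stability

end Subdivide

theorem stmt_9_general {V : Type*} [Fintype V] [DecidableEq V] (G : SimpleGraph V)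
    (hχ : chi G = 3) (hivs : ivsChi G ≤ 3) (t : ℕ) (x y : Fin t → V) (n : Fin t → ℕ)
    (hadj : ∀ i, G.Adj (x i) (y i))
    (hdistinct : ∀ i j, i ≠ j → ¬((x i = x j ∧ y i = y j) ∨ (x i = y j ∧ y i = x j)))
    (hC : ∀ i, ¬(memCchi G (x i) ∧ memCchi G (y i))) (hn : ∀ i, 0 < n i ∧ Even (n i)) :
    maxDeg (subdivide G t x y n) = maxDeg G ∧ chi (subdivide G t x y n) = 3 ∧
      ivsChi (subdivide G t x y n) = ivsChi G ∧ vsChi (subdivide G t x y n) = vsChi G := by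
  have hpos i : 0 < n i := (hn i).1
  have heven i : Even (n i) := (hn i).2
  have hinj : Function.Injective fun i => s(x i, y i) := fun i j hij =>
    not_imp_not.1 (hdistinct i j) (Sym2.eq_iff.1 hij)
  have hΔ : 2 ≤ maxDeg G := two_le_maxDeg_of_not_colorable_two fun h => by
    have := chi_le_iff_colorable.2 h
    lia
  exact ⟨maxDeg_subdivide hadj hinj hpos hΔ, chi_subdivide_eq_three hadj hpos heven hχ,
    ivsChi_subdivide hadj hpos heven hC hχ hivs, vsChi_subdivide hadj hpos heven hχ⟩

/-- Subdividing, with even positive numbers of new vertices, edges of `G` each having at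
most one endpoint in `C_χ(G)` preserves `Δ = 4`, `χ = 3`, `ivs_χ = 3` and `vs_χ = 2`. -/
theorem stmt_9 {V : Type*} [Fintype V] [DecidableEq V] (G : SimpleGraph V)
    (hΔ : maxDeg G = 4) (hχ : chi G = 3) (hivs : ivsChi G = 3) (hvs : vsChi G = 2)
    (t : ℕ) (x y : Fin t → V) (n : Fin t → ℕ)
    (hadj : ∀ i, G.Adj (x i) (y i))
    (hdistinct : ∀ i j, i ≠ j →
      ¬((x i = x j ∧ y i = y j) ∨ (x i = y j ∧ y i = x j)))
    (hC : ∀ i, ¬(memCchi G (x i) ∧ memCchi G (y i)))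
    (hn : ∀ i, 0 < n i ∧ Even (n i)) :
    maxDeg (subdivide G t x y n) = 4 ∧ chi (subdivide G t x y n) = 3 ∧
      ivsChi (subdivide G t x y n) = 3 ∧ vsChi (subdivide G t x y n) = 2 := by
  obtain ⟨hΔ', hχ', hivs', hvs'⟩ := stmt_9_general G hχ hivs.le t x y n hadj hdistinct hC hn
  exact ⟨hΔ'.trans hΔ, hχ', hivs'.trans hivs, hvs'.trans hvs⟩
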